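/- For every z ∈ 𝔻 with |z| = r ≤ 1/5: ∑_{n=0}^∞ |a_n| r^n + (1/(1+|a_0|) + r/(1-r)) · ∑_{n=1}^∞ |a_n|² r^{2n} + |f(z) - a_0| ≤ 1. Moreover, for every z ∈ 𝔻 with |z| = r ≤ 1/3: |a_0|² + ∑_{n=1}^∞ |a_n| r^n + (1/(1+|a_0|) + r/(1-r)) · ∑_{n=1}^∞ |a_n|² r^{2n} + |f(z) - a_0| ≤ 1. -/

import Mathlib

/-!
A bounded analytic function `f = ∑ aₙ zⁿ` with `|f| ≤ 1` acts on `H²` as a contraction. Testing this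
on `1 + X ^ m * q`, where the coefficients of the polynomial `q` are suitably weighted and reversed
conjugates of `a₀, …, aₙ`, yields Carlson's coefficient inequalities
`|a₂ₙ₊₁| + ∑_{k ≤ n} |aₖ|² ≤ 1` and `|a₂ₙ| + ∑_{k < n} |aₖ|² + |aₙ|² / (1 + |a₀|) ≤ 1`.
Multiplying by powers of `r` and summing, the partial sums of squares turn into the series
`∑ |aₙ|² r²ⁿ` divided by `1 - r²`, so that, by a cancellation of `1 + r`,
`∑_{n ≥ 1} |aₙ| rⁿ + (1 / (1 + |a₀|) + r / (1 - r)) ∑_{n ≥ 1} |aₙ|² r²ⁿ ≤ (1 - |a₀|²) r / (1 - r)`.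
The left side dominates `|f z - a₀|`, so adding this distance at most doubles the right side, and
`r / (1 - r)` is at most `1 / 4` or `1 / 2` on the two disks.
-/

section Series

lemma hasSum_sum_range_succ_mul_pow {𝕜 : Type*} [NormedField 𝕜] [CompleteSpace 𝕜] {c : ℕ → 𝕜}
    {x : 𝕜} (hx : ‖x‖ < 1) (hc : Summable fun n ↦ ‖c n * x ^ n‖) :
    HasSum (fun n ↦ (∑ k ∈ Finset.range (n + 1), c k) * x ^ n)
      ((∑' n, c n * x ^ n) * (1 - x)⁻¹) := by
  convert hasSum_sum_range_mul_of_summable_norm hc (summable_norm_geometric_of_norm_lt_one hx)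
    using 2 with n
  · rw [Finset.sum_mul]
    refine Finset.sum_congr rfl fun k hk ↦ ?_
    rw [mul_assoc, ← pow_add, Nat.add_sub_cancel' (Finset.mem_range_succ_iff.1 hk)]
  · exact (tsum_geometric_of_norm_lt_one hx).symm

lemma hasSum_odd_add_even_succ {E : Type*} [NormedAddCommGroup E] [CompleteSpace E] {c : ℕ → E}
    (hc : Summable fun n ↦ c (n + 1)) :
    HasSum (fun n ↦ c (2 * n + 1) + c (2 * (n + 1))) (∑' n, c (n + 1)) := by
  have hodd : Summable fun n ↦ c (2 * n + 1) :=
    hc.comp_injective (i := fun n ↦ 2 * n) fun _ _ h ↦ by simpa using h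
  have heven : Summable fun n ↦ c (2 * n + 1 + 1) :=
    hc.comp_injective (i := fun n ↦ 2 * n + 1) fun _ _ h ↦ by simpa using h
  rw [← tsum_even_add_odd (f := fun n ↦ c (n + 1)) hodd heven]
  exact hodd.hasSum.add heven.hasSum

lemma norm_sub_apply_zero_le_tsum {E : Type*} [NormedAddCommGroup E] {c : ℕ → E} {w : E}
    (hw : HasSum c w) (hc : Summable fun n ↦ ‖c (n + 1)‖) :
    ‖w - c 0‖ ≤ ∑' n, ‖c (n + 1)‖ := by
  have htail : HasSum (fun n ↦ c (n + 1)) (w - c 0) := by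
    simpa using (hasSum_nat_add_iff' 1).2 hw
  exact htail.tsum_eq ▸ norm_tsum_le_tsum_norm hc

end Series

section PowerSeries

open PowerSeries Filter Topology

section UnitDisk

variable {𝕜 : Type*} [NormedField 𝕜] {φ ψ : 𝕜⟦X⟧} {z : 𝕜}

lemma summable_norm_coeff_mul_pow_of_norm_eq_one (hφ : Summable fun n ↦ ‖coeff n φ‖)
    (hz : ‖z‖ = 1) : Summable fun n ↦ ‖coeff n φ * z ^ n‖ := by
  simpa [hz] using hφ

lemma tendsto_eval_trunc [CompleteSpace 𝕜] (hφ : Summable fun n ↦ ‖coeff n φ‖) (hz : ‖z‖ = 1) :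
    Tendsto (fun N ↦ (trunc N φ).eval z) atTop (𝓝 (∑' n, coeff n φ * z ^ n)) := by
  simpa only [Polynomial.eval, eval₂_trunc_eq_sum_range, RingHom.id_apply] using
    (summable_norm_coeff_mul_pow_of_norm_eq_one hφ hz).of_norm.hasSum.tendsto_sum_nat

lemma norm_eval_trunc_le (hφ : Summable fun n ↦ ‖coeff n φ‖) (hz : ‖z‖ = 1) (N : ℕ) :
    ‖(trunc N φ).eval z‖ ≤ ∑' n, ‖coeff n φ‖ := by
  rw [Polynomial.eval, eval₂_trunc_eq_sum_range]
  calc ‖∑ i ∈ Finset.range N, coeff i φ * z ^ i‖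
      ≤ ∑ i ∈ Finset.range N, ‖coeff i φ‖ := norm_sum_le_of_le _ fun i _ ↦ by simp [hz]
    _ ≤ ∑' n, ‖coeff n φ‖ := hφ.sum_le_tsum _ fun _ _ ↦ norm_nonneg _

lemma summable_norm_coeff_mul (hφ : Summable fun n ↦ ‖coeff n φ‖)
    (hψ : Summable fun n ↦ ‖coeff n ψ‖) : Summable fun n ↦ ‖coeff n (φ * ψ)‖ := by
  simpa only [coeff_mul] using summable_norm_sum_mul_antidiagonal_of_summable_norm hφ hψ

lemma tsum_coeff_mul_mul_pow [CompleteSpace 𝕜] (hφ : Summable fun n ↦ ‖coeff n φ‖)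
    (hψ : Summable fun n ↦ ‖coeff n ψ‖) (hz : ‖z‖ = 1) :
    ∑' n, coeff n (φ * ψ) * z ^ n = (∑' n, coeff n φ * z ^ n) * ∑' n, coeff n ψ * z ^ n := by
  have hφz := summable_norm_coeff_mul_pow_of_norm_eq_one hφ hz
  have hψz := summable_norm_coeff_mul_pow_of_norm_eq_one hψ hz
  rw [tsum_mul_tsum_eq_tsum_sum_antidiagonal_of_summable_norm hφz hψz]
  refine tsum_congr fun n ↦ ?_
  rw [coeff_mul, Finset.sum_mul]
  refine Finset.sum_congr rfl fun p hp ↦ ?_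
  obtain rfl := Finset.HasAntidiagonal.mem_antidiagonal.1 hp
  rw [pow_add, mul_mul_mul_comm]

lemma norm_coeff_rescale (z : 𝕜) (ψ : 𝕜⟦X⟧) (n : ℕ) :
    ‖coeff n (rescale z ψ)‖ = ‖z‖ ^ n * ‖coeff n ψ‖ := by
  rw [coeff_rescale, norm_mul, norm_pow]

lemma summable_norm_coeff_rescale (hψ : Summable fun n ↦ ‖coeff n ψ‖ ^ 2) (hz : ‖z‖ < 1) :
    Summable fun n ↦ ‖coeff n (rescale z ψ)‖ := by
  obtain ⟨C, hC⟩ := hψ.tendsto_atTop_zero.bddAbove_range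
  have hle (n : ℕ) : ‖coeff n ψ‖ ≤ √C := Real.le_sqrt_of_sq_le (hC ⟨n, rfl⟩)
  refine .of_nonneg_of_le (fun n ↦ norm_nonneg _) (fun n ↦ ?_)
    ((summable_geometric_of_lt_one (norm_nonneg z) hz).mul_right √C)
  rw [norm_coeff_rescale]
  exact mul_le_mul_of_nonneg_left (hle n) (by positivity)

end UnitDisk

section Parseval

variable {φ ψ : ℂ⟦X⟧}

lemma sum_range_sq_norm_coeff_eq_circleAverage (φ : ℂ⟦X⟧) (N : ℕ) :
    ∑ i ∈ Finset.range N, ‖coeff i φ‖ ^ 2 =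
      Real.circleAverage (fun z ↦ ‖(trunc N φ).eval z‖ ^ 2) 0 1 := by
  rw [← Polynomial.sum_sq_norm_coeff_eq_circleAverage]
  have hsupp : (trunc N φ).support ⊆ Finset.range N := fun i hi ↦ by
    simpa using (by simpa [coeff_trunc] using hi : i < N ∧ _).1
  rw [Finset.sum_subset hsupp fun i _ hi ↦ by simp [Polynomial.notMem_support_iff.1 hi]]
  exact Finset.sum_congr rfl fun i hi ↦ by rw [coeff_trunc, if_pos (Finset.mem_range.1 hi)]

lemma hasSum_sq_norm_coeff_circleAverage (hφ : Summable fun n ↦ ‖coeff n φ‖) :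
    HasSum (fun n ↦ ‖coeff n φ‖ ^ 2)
      (Real.circleAverage (fun z ↦ ‖∑' n, coeff n φ * z ^ n‖ ^ 2) 0 1) := by
  rw [hasSum_iff_tendsto_nat_of_nonneg fun _ ↦ by positivity]
  simp only [sum_range_sq_norm_coeff_eq_circleAverage, Real.circleAverage]
  refine (intervalIntegral.tendsto_integral_filter_of_dominated_convergence
    (fun _ ↦ (∑' n, ‖coeff n φ‖) ^ 2) (.of_forall fun N ↦ ?_) (.of_forall fun N ↦ ?_)
    intervalIntegrable_const ?_).const_smul _
  · exact (by fun_prop : Continuous _).aestronglyMeasurable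
  · refine .of_forall fun θ _ ↦ ?_
    rw [norm_pow, norm_norm]
    gcongr
    exact norm_eval_trunc_le hφ (by simp) N
  · exact .of_forall fun θ _ ↦ (tendsto_eval_trunc hφ (by simp)).norm.pow 2

lemma circleIntegrable_sq_norm_tsum (hφ : Summable fun n ↦ ‖coeff n φ‖) :
    CircleIntegrable (fun z ↦ ‖∑' n, coeff n φ * z ^ n‖ ^ 2) 0 1 := by
  refine ContinuousOn.circleIntegrable zero_le_one ((ContinuousOn.norm ?_).pow 2)
  refine continuousOn_tsum (fun n ↦ by fun_prop) hφ fun n z hz ↦ ?_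
  simp [mem_sphere_zero_iff_norm.1 hz]

lemma tsum_sq_norm_coeff_mul_le (hφ : Summable fun n ↦ ‖coeff n φ‖)
    (hψ : Summable fun n ↦ ‖coeff n ψ‖)
    (hle : ∀ z : ℂ, ‖z‖ = 1 → ‖∑' n, coeff n φ * z ^ n‖ ≤ 1) :
    ∑' n, ‖coeff n (φ * ψ)‖ ^ 2 ≤ ∑' n, ‖coeff n ψ‖ ^ 2 := by
  have hφψ := summable_norm_coeff_mul hφ hψ
  rw [(hasSum_sq_norm_coeff_circleAverage hφψ).tsum_eq,
    (hasSum_sq_norm_coeff_circleAverage hψ).tsum_eq]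
  refine Real.circleAverage_mono (circleIntegrable_sq_norm_tsum hφψ)
    (circleIntegrable_sq_norm_tsum hψ) fun z hz ↦ ?_
  replace hz : ‖z‖ = 1 := by simpa using hz
  rw [tsum_coeff_mul_mul_pow hφ hψ hz, norm_mul]
  gcongr
  exact mul_le_of_le_one_left (norm_nonneg _) (hle z hz)

end Parseval

/-- `φ` is a contractive multiplier of the Hardy space `H²`, whose elements are encoded as the power
series with square-summable coefficients. Testing finite partial sums makes the square-summability
of the coefficients of `φ * ψ` part of the definition. -/
def IsContractiveMultiplier {𝕜 : Type*} [NormedRing 𝕜] (φ : 𝕜⟦X⟧) : Prop :=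
  ∀ ψ : 𝕜⟦X⟧, (Summable fun n ↦ ‖coeff n ψ‖ ^ 2) →
    ∀ s : Finset ℕ, ∑ i ∈ s, ‖coeff i (φ * ψ)‖ ^ 2 ≤ ∑' n, ‖coeff n ψ‖ ^ 2

theorem isContractiveMultiplier_of_norm_le_one {f : ℂ → ℂ} {φ : ℂ⟦X⟧}
    (hf : ∀ z ∈ Metric.ball (0 : ℂ) 1, HasSum (fun n ↦ coeff n φ * z ^ n) (f z))
    (hf_le : ∀ z ∈ Metric.ball (0 : ℂ) 1, ‖f z‖ ≤ 1) : IsContractiveMultiplier φ := by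
  intro ψ hψ s
  have dilated (r : ℝ) (hr₀ : 0 < r) (hr₁ : r < 1) :
      ∑ i ∈ s, (r ^ i * ‖coeff i (φ * ψ)‖) ^ 2 ≤ ∑' n, ‖coeff n ψ‖ ^ 2 := by
    have hr : ‖(r : ℂ)‖ = r := Complex.norm_of_nonneg hr₀.le
    have mem_ball {z : ℂ} (hz : ‖z‖ = 1) : r * z ∈ Metric.ball (0 : ℂ) 1 := by
      simpa [hz, hr, abs_of_pos hr₀] using hr₁
    have hφr {z : ℂ} (hz : ‖z‖ = 1) :
        HasSum (fun n ↦ coeff n (rescale (r : ℂ) φ) * z ^ n) (f (r * z)) := by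
      simpa [coeff_rescale, mul_pow, mul_assoc, mul_left_comm] using hf _ (mem_ball hz)
    have hφ_sum : Summable fun n ↦ ‖coeff n (rescale (r : ℂ) φ)‖ := by
      simpa using (hφr norm_one).summable.norm
    have hψ_sum := summable_norm_coeff_rescale hψ (hr.trans_lt hr₁)
    calc ∑ i ∈ s, (r ^ i * ‖coeff i (φ * ψ)‖) ^ 2
        = ∑ i ∈ s, ‖coeff i (rescale (r : ℂ) φ * rescale (r : ℂ) ψ)‖ ^ 2 := by
          simp only [← map_mul, norm_coeff_rescale, hr]
      _ ≤ ∑' n, ‖coeff n (rescale (r : ℂ) φ * rescale (r : ℂ) ψ)‖ ^ 2 :=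
          (hasSum_sq_norm_coeff_circleAverage
            (summable_norm_coeff_mul hφ_sum hψ_sum)).summable.sum_le_tsum _
              fun _ _ ↦ by positivity
      _ ≤ ∑' n, ‖coeff n (rescale (r : ℂ) ψ)‖ ^ 2 :=
          tsum_sq_norm_coeff_mul_le hφ_sum hψ_sum fun z hz ↦
            (hφr hz).tsum_eq ▸ hf_le _ (mem_ball hz)
      _ ≤ ∑' n, ‖coeff n ψ‖ ^ 2 := by
          refine (hasSum_sq_norm_coeff_circleAverage hψ_sum).summable.tsum_le_tsum (fun n ↦ ?_) hψ
          rw [norm_coeff_rescale, hr]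
          gcongr
          exact mul_le_of_le_one_left (norm_nonneg _) (pow_le_one₀ hr₀.le hr₁.le)
  have hlim : Tendsto (fun r : ℝ ↦ ∑ i ∈ s, (r ^ i * ‖coeff i (φ * ψ)‖) ^ 2) (𝓝[<] 1)
      (𝓝 (∑ i ∈ s, ‖coeff i (φ * ψ)‖ ^ 2)) := by
    have hcont : Continuous fun r : ℝ ↦ ∑ i ∈ s, (r ^ i * ‖coeff i (φ * ψ)‖) ^ 2 := by fun_prop
    simpa using (hcont.tendsto 1).mono_left nhdsWithin_le_nhds
  refine le_of_tendsto hlim ?_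
  filter_upwards [Ioo_mem_nhdsLT zero_lt_one] with r hr using dilated r hr.1 hr.2

end PowerSeries

namespace IsContractiveMultiplier

open PowerSeries

lemma sum_sq_norm_add_coeff_mul_le {𝕜 : Type*} [NormedRing 𝕜] [NormOneClass 𝕜] {φ ψ : 𝕜⟦X⟧}
    (hφ : IsContractiveMultiplier φ) (hψ : Summable fun n ↦ ‖coeff n ψ‖ ^ 2) {m : ℕ} (hm : m ≠ 0)
    (s : Finset ℕ) :
    ∑ i ∈ Finset.range m, ‖coeff i φ‖ ^ 2 + ∑ j ∈ s, ‖coeff (m + j) φ + coeff j (φ * ψ)‖ ^ 2 ≤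
      1 + ∑' n, ‖coeff n ψ‖ ^ 2 := by
  have hlow {i : ℕ} (hi : i < m) (χ : 𝕜⟦X⟧) : coeff i (χ * X ^ m) = 0 := by
    rw [coeff_mul_X_pow', if_neg hi.not_ge]
  have hshift (j : ℕ) : coeff (j + m) (1 + ψ * X ^ m) = coeff j ψ := by
    rw [map_add, coeff_mul_X_pow, coeff_one, if_neg (by lia), zero_add]
  have htest : HasSum (fun n ↦ ‖coeff n (1 + ψ * X ^ m)‖ ^ 2) (1 + ∑' n, ‖coeff n ψ‖ ^ 2) := by
    have hhead : ∑ i ∈ Finset.range m, ‖coeff i (1 + ψ * X ^ m)‖ ^ 2 = 1 := by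
      rw [Finset.sum_eq_single_of_mem 0 (by simpa using hm.pos)]
      · rw [map_add, hlow hm.pos, add_zero, coeff_zero_one, norm_one, one_pow]
      · intro i hi hi₀
        simp [hlow (Finset.mem_range.1 hi), coeff_one, hi₀]
    rw [add_comm (1 : ℝ), ← hhead, ← hasSum_nat_add_iff]
    simpa only [hshift] using hψ.hasSum
  have hbound := hφ _ htest.summable (Finset.range m ∪ s.map (addLeftEmbedding m))
  rw [htest.tsum_eq, Finset.sum_union (Finset.disjoint_range_addLeftEmbedding m s),
    Finset.sum_map, mul_add, mul_one, ← mul_assoc] at hbound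
  refine le_of_eq_of_le (congrArg₂ _ (Finset.sum_congr rfl fun i hi ↦ ?_)
    (Finset.sum_congr rfl fun j _ ↦ ?_)) hbound
  · rw [map_add, hlow (Finset.mem_range.1 hi), add_zero]
  · rw [addLeftEmbedding_apply, map_add, add_comm m j, coeff_mul_X_pow]

lemma norm_coeff_le_one {𝕜 : Type*} [NormedRing 𝕜] [NormOneClass 𝕜] {φ : 𝕜⟦X⟧}
    (hφ : IsContractiveMultiplier φ) (n : ℕ) : ‖coeff n φ‖ ≤ 1 := by
  have hone : HasSum (fun n ↦ ‖coeff n (1 : 𝕜⟦X⟧)‖ ^ 2) 1 := by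
    convert hasSum_ite_eq 0 (1 : ℝ) using 2 with n
    split_ifs with hn <;> simp [coeff_one, hn]
  have := hφ 1 hone.summable {n}
  rw [hone.tsum_eq, mul_one, Finset.sum_singleton] at this
  exact (sq_le_one_iff₀ (norm_nonneg _)).1 this

end IsContractiveMultiplier

lemma norm_add_mul_ofReal_of_norm_eq_one {𝕜 : Type*} [RCLike 𝕜] {u c : 𝕜} (hu : ‖u‖ = 1)
    (hc : u * ‖c‖ = c) {t : ℝ} (ht : 0 ≤ t) : ‖c + u * (t : 𝕜)‖ = ‖c‖ + t := by
  calc ‖c + u * (t : 𝕜)‖ = ‖u * ((‖c‖ + t : ℝ) : 𝕜)‖ := by rw [RCLike.ofReal_add, mul_add, hc]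
    _ = ‖c‖ + t := by rw [norm_mul, hu, one_mul, RCLike.norm_of_nonneg (by positivity)]

section Carlson

open PowerSeries ComplexConjugate

variable {𝕜 : Type*} [RCLike 𝕜]

/-- The weighted reversed conjugate `u * ∑_{k ≤ n} w k * conj (φ k) * X ^ (n - k)` of the truncation
of `φ` at degree `n`, whose product with `φ` has `u * ∑_{k ≤ n} w k * ‖φ k‖ ^ 2` as its coefficient
of `X ^ n`. -/
noncomputable def conjReflect (u : 𝕜) (w : ℕ → ℝ) (n : ℕ) (φ : 𝕜⟦X⟧) : 𝕜⟦X⟧ :=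
  mk fun j ↦ if j ≤ n then u * (w (n - j) * conj (coeff (n - j) φ)) else 0

lemma coeff_mul_conjReflect (u : 𝕜) (w : ℕ → ℝ) (n : ℕ) (φ : 𝕜⟦X⟧) :
    coeff n (φ * conjReflect u w n φ) =
      u * ((∑ k ∈ Finset.range (n + 1), w k * ‖coeff k φ‖ ^ 2 : ℝ) : 𝕜) := by
  rw [coeff_mul, Finset.Nat.sum_antidiagonal_eq_sum_range_succ_mk]
  push_cast
  rw [Finset.mul_sum]
  refine Finset.sum_congr rfl fun k hk ↦ ?_
  have hk : k ≤ n := Finset.mem_range_succ_iff.1 hk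
  rw [conjReflect, coeff_mk, if_pos (n.sub_le k), Nat.sub_sub_self hk, ← RCLike.mul_conj]
  ring

lemma coeff_zero_conjReflect (u : 𝕜) (w : ℕ → ℝ) (n : ℕ) (φ : 𝕜⟦X⟧) :
    coeff 0 (conjReflect u w n φ) = u * (w n * conj (coeff n φ)) := by
  rw [conjReflect, coeff_mk, if_pos n.zero_le, Nat.sub_zero]

lemma norm_coeff_zero_mul_conjReflect {u : 𝕜} (hu : ‖u‖ = 1) (w : ℕ → ℝ) (n : ℕ) (φ : 𝕜⟦X⟧) :
    ‖coeff 0 (φ * conjReflect u w n φ)‖ = |w n| * ‖coeff 0 φ‖ * ‖coeff n φ‖ := by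
  rw [coeff_mul, Finset.Nat.antidiagonal_zero, Finset.sum_singleton, coeff_zero_conjReflect]
  simp only [norm_mul, hu, RCLike.norm_conj, RCLike.norm_ofReal]
  ring

lemma hasSum_sq_norm_coeff_conjReflect {u : 𝕜} (hu : ‖u‖ = 1) (w : ℕ → ℝ) (n : ℕ) (φ : 𝕜⟦X⟧) :
    HasSum (fun j ↦ ‖coeff j (conjReflect u w n φ)‖ ^ 2)
      (∑ k ∈ Finset.range (n + 1), w k ^ 2 * ‖coeff k φ‖ ^ 2) := by
  rw [← Finset.sum_range_reflect]
  have hcoeff (j : ℕ) (hj : j ∈ Finset.range (n + 1)) :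
      w (n + 1 - 1 - j) ^ 2 * ‖coeff (n + 1 - 1 - j) φ‖ ^ 2 =
        ‖coeff j (conjReflect u w n φ)‖ ^ 2 := by
    simp [conjReflect, Finset.mem_range_succ_iff.1 hj, hu, mul_pow]
  rw [Finset.sum_congr rfl hcoeff]
  refine hasSum_sum_of_ne_finset_zero fun j hj ↦ ?_
  rw [conjReflect, coeff_mk, if_neg fun h ↦ hj (Finset.mem_range_succ_iff.2 h), norm_zero, sq,
    zero_mul]

variable {φ : 𝕜⟦X⟧}

theorem IsContractiveMultiplier.norm_coeff_odd_add_sum_le (hφ : IsContractiveMultiplier φ) (n : ℕ) :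
    ‖coeff (2 * n + 1) φ‖ + ∑ k ∈ Finset.range (n + 1), ‖coeff k φ‖ ^ 2 ≤ 1 := by
  obtain ⟨u, hu, hu_mul⟩ := RCLike.exists_norm_mul_eq_self (coeff (2 * n + 1) φ)
  set S := ∑ k ∈ Finset.range (n + 1), ‖coeff k φ‖ ^ 2
  have hS : 0 ≤ S := Finset.sum_nonneg fun _ _ ↦ by positivity
  have hψ : HasSum (fun j ↦ ‖coeff j (conjReflect u 1 n φ)‖ ^ 2) S := by
    simpa using hasSum_sq_norm_coeff_conjReflect hu 1 n φ
  have hcoeff : coeff n (φ * conjReflect u 1 n φ) = u * (S : 𝕜) := by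
    simp only [coeff_mul_conjReflect, Pi.one_apply, one_mul, S]
  have htest : S + (‖coeff (2 * n + 1) φ‖ + S) ^ 2 ≤ 1 + S := by
    have := hφ.sum_sq_norm_add_coeff_mul_le hψ.summable n.succ_ne_zero {n}
    rwa [hψ.tsum_eq, Finset.sum_singleton, hcoeff, show n.succ + n = 2 * n + 1 by lia,
      norm_add_mul_ofReal_of_norm_eq_one hu hu_mul hS] at this
  exact (sq_le_one_iff₀ (by positivity)).1 (by linarith)

theorem IsContractiveMultiplier.norm_coeff_even_add_sum_le (hφ : IsContractiveMultiplier φ) {n : ℕ}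
    (hn : n ≠ 0) :
    ‖coeff (2 * n) φ‖ + ∑ k ∈ Finset.range n, ‖coeff k φ‖ ^ 2
      + ‖coeff n φ‖ ^ 2 / (1 + ‖coeff 0 φ‖) ≤ 1 := by
  obtain ⟨u, hu, hu_mul⟩ := RCLike.exists_norm_mul_eq_self (coeff (2 * n) φ)
  set S := ∑ k ∈ Finset.range n, ‖coeff k φ‖ ^ 2
  set b := ‖coeff n φ‖
  set t := (1 + ‖coeff 0 φ‖)⁻¹ with ht
  have ht_mul : t * ‖coeff 0 φ‖ = 1 - t := by rw [ht]; field_simp; ring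
  have ht_nonneg : 0 ≤ t := by positivity
  -- With last weight `t`, the coefficient of `X ^ n` in `φ * (1 + ψ * X ^ n)` has norm at least
  -- `b - t * ‖coeff 0 φ‖ * b = t * b`, which cancels the contribution of `coeff 0 ψ` to the bound.
  let w : ℕ → ℝ := Function.update 1 n t
  have hw {k : ℕ} (hk : k ∈ Finset.range n) : w k = 1 :=
    Function.update_of_ne (Finset.mem_range.1 hk).ne _ _
  have hwn : w n = t := Function.update_self ..
  set ψ := conjReflect u w n φ
  have hψ : HasSum (fun j ↦ ‖coeff j ψ‖ ^ 2) (S + t ^ 2 * b ^ 2) := by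
    have := hasSum_sq_norm_coeff_conjReflect hu w n φ
    rwa [Finset.sum_range_succ, hwn,
      Finset.sum_congr rfl fun k hk ↦ by rw [hw hk, one_pow, one_mul]] at this
  have hcoeff_n : coeff n (φ * ψ) = u * ((S + t * b ^ 2 : ℝ) : 𝕜) := by
    rw [coeff_mul_conjReflect, Finset.sum_range_succ, hwn,
      Finset.sum_congr rfl fun k hk ↦ by rw [hw hk, one_mul]]
  have hcoeff_zero : (t * b) ^ 2 ≤ ‖coeff n φ + coeff 0 (φ * ψ)‖ ^ 2 := by
    have hnorm : ‖coeff 0 (φ * ψ)‖ = (1 - t) * b := by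
      rw [norm_coeff_zero_mul_conjReflect hu, hwn, abs_of_nonneg ht_nonneg, ht_mul]
    gcongr
    linarith [norm_sub_le_norm_add (coeff n φ) (coeff 0 (φ * ψ))]
  have htest : S + ((t * b) ^ 2 + (‖coeff (2 * n) φ‖ + (S + t * b ^ 2)) ^ 2)
      ≤ 1 + (S + t ^ 2 * b ^ 2) := by
    have := hφ.sum_sq_norm_add_coeff_mul_le hψ.summable hn {0, n}
    rw [hψ.tsum_eq, Finset.sum_pair hn.symm, add_zero, hcoeff_n, ← two_mul,
      norm_add_mul_ofReal_of_norm_eq_one hu hu_mul (by positivity)] at this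
    linarith
  have hsq : (‖coeff (2 * n) φ‖ + (S + t * b ^ 2)) ^ 2 ≤ 1 := by linarith
  have := (sq_le_one_iff₀ (by positivity)).1 hsq
  rw [div_eq_inv_mul]
  linarith

end Carlson

section Bohr

open PowerSeries

namespace IsContractiveMultiplier

variable {𝕜 : Type*} [RCLike 𝕜] {φ : 𝕜⟦X⟧} {r : ℝ}

lemma summable_norm_coeff_mul_pow (hφ : IsContractiveMultiplier φ) (hr₀ : 0 ≤ r) (hr₁ : r < 1) :
    Summable fun n ↦ ‖coeff n φ‖ * r ^ n :=
  .of_nonneg_of_le (fun _ ↦ by positivity)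
    (fun n ↦ mul_le_of_le_one_left (by positivity) (hφ.norm_coeff_le_one n))
    (summable_geometric_of_lt_one hr₀ hr₁)

lemma summable_sq_norm_coeff_mul_pow (hφ : IsContractiveMultiplier φ) (hr₀ : 0 ≤ r) (hr₁ : r < 1) :
    Summable fun n ↦ ‖coeff n φ‖ ^ 2 * r ^ n :=
  .of_nonneg_of_le (fun _ ↦ by positivity)
    (fun n ↦ mul_le_of_le_one_left (by positivity)
      (pow_le_one₀ (norm_nonneg _) (hφ.norm_coeff_le_one n)))
    (summable_geometric_of_lt_one hr₀ hr₁)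

lemma hasSum_one_sub_sum_sq_norm_coeff_mul_pow (hφ : IsContractiveMultiplier φ) (hr₀ : 0 ≤ r)
    (hr₁ : r < 1) :
    HasSum (fun n ↦ (1 - ∑ k ∈ Finset.range (n + 1), ‖coeff k φ‖ ^ 2) * r ^ n)
      ((1 - ∑' n, ‖coeff n φ‖ ^ 2 * r ^ n) / (1 - r)) := by
  have hr : ‖r‖ < 1 := by rwa [Real.norm_of_nonneg hr₀]
  simpa only [sub_mul, one_mul, div_eq_mul_inv] using (hasSum_geometric_of_lt_one hr₀ hr₁).sub
    (hasSum_sum_range_succ_mul_pow hr (hφ.summable_sq_norm_coeff_mul_pow hr₀ hr₁).norm)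

theorem tsum_norm_coeff_add_tsum_sq_le (hφ : IsContractiveMultiplier φ) (hr₀ : 0 ≤ r)
    (hr₁ : r < 1) :
    ∑' n, ‖coeff (n + 1) φ‖ * r ^ (n + 1)
      + (1 / (1 + ‖coeff 0 φ‖) + r / (1 - r))
        * ∑' n, ‖coeff (n + 1) φ‖ ^ 2 * r ^ (2 * (n + 1)) ≤
      (1 - ‖coeff 0 φ‖ ^ 2) * (r / (1 - r)) := by
  have hr2₀ : 0 ≤ r ^ 2 := sq_nonneg r
  have hr2₁ : r ^ 2 < 1 := pow_lt_one₀ hr₀ hr₁ two_ne_zero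
  have hsq := hφ.summable_sq_norm_coeff_mul_pow hr2₀ hr2₁
  simp only [pow_mul]
  set T := ∑' n, ‖coeff (n + 1) φ‖ ^ 2 * (r ^ 2) ^ (n + 1)
  have hT : HasSum (fun n ↦ ‖coeff (n + 1) φ‖ ^ 2 * (r ^ 2) ^ (n + 1)) T :=
    ((summable_nat_add_iff 1).2 hsq).hasSum
  have hdefect := hφ.hasSum_one_sub_sum_sq_norm_coeff_mul_pow hr2₀ hr2₁
  rw [hsq.tsum_eq_zero_add, pow_zero, mul_one] at hdefect
  have hle : ∑' n, ‖coeff (n + 1) φ‖ * r ^ (n + 1) ≤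
      (r + r ^ 2) * ((1 - (‖coeff 0 φ‖ ^ 2 + T)) / (1 - r ^ 2)) - (1 / (1 + ‖coeff 0 φ‖)) * T := by
    have hsum : Summable fun n ↦ ‖coeff (n + 1) φ‖ * r ^ (n + 1) :=
      (summable_nat_add_iff 1).2 (hφ.summable_norm_coeff_mul_pow hr₀ hr₁)
    refine hasSum_le (fun n ↦ ?_)
      (hasSum_odd_add_even_succ (c := fun n ↦ ‖coeff n φ‖ * r ^ n) hsum)
      ((hdefect.mul_left (r + r ^ 2)).sub (hT.mul_left (1 / (1 + ‖coeff 0 φ‖))))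
    calc ‖coeff (2 * n + 1) φ‖ * r ^ (2 * n + 1) + ‖coeff (2 * (n + 1)) φ‖ * r ^ (2 * (n + 1))
        ≤ (1 - ∑ k ∈ Finset.range (n + 1), ‖coeff k φ‖ ^ 2) * r ^ (2 * n + 1)
          + (1 - ∑ k ∈ Finset.range (n + 1), ‖coeff k φ‖ ^ 2
            - ‖coeff (n + 1) φ‖ ^ 2 / (1 + ‖coeff 0 φ‖)) * r ^ (2 * (n + 1)) := by
          gcongr
          · linarith [hφ.norm_coeff_odd_add_sum_le n]
          · linarith [hφ.norm_coeff_even_add_sum_le n.succ_ne_zero]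
      _ = _ := by ring
  have hgeom : (r + r ^ 2) * ((1 - (‖coeff 0 φ‖ ^ 2 + T)) / (1 - r ^ 2)) =
      (1 - ‖coeff 0 φ‖ ^ 2 - T) * (r / (1 - r)) := by
    have : 1 - r ≠ 0 := by linarith
    have : 1 + r ≠ 0 := by linarith
    rw [show 1 - r ^ 2 = (1 - r) * (1 + r) by ring]
    field_simp
    ring
  linarith

end IsContractiveMultiplier

theorem IsContractiveMultiplier.tsum_norm_coeff_add_tsum_sq_add_norm_sub_le {𝕜 : Type*}
    [RCLike 𝕜] {φ : 𝕜⟦X⟧} (hφ : IsContractiveMultiplier φ) {z w : 𝕜} (hz : ‖z‖ < 1)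
    (hw : HasSum (fun n ↦ coeff n φ * z ^ n) w) :
    ∑' n, ‖coeff (n + 1) φ‖ * ‖z‖ ^ (n + 1)
      + (1 / (1 + ‖coeff 0 φ‖) + ‖z‖ / (1 - ‖z‖))
        * ∑' n, ‖coeff (n + 1) φ‖ ^ 2 * ‖z‖ ^ (2 * (n + 1))
      + ‖w - coeff 0 φ‖ ≤ 2 * ((1 - ‖coeff 0 φ‖ ^ 2) * (‖z‖ / (1 - ‖z‖))) := by
  have hmajorant := hφ.tsum_norm_coeff_add_tsum_sq_le (norm_nonneg z) hz
  have hsquares : 0 ≤ (1 / (1 + ‖coeff 0 φ‖) + ‖z‖ / (1 - ‖z‖))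
      * ∑' n, ‖coeff (n + 1) φ‖ ^ 2 * ‖z‖ ^ (2 * (n + 1)) := by
    have : 0 < 1 - ‖z‖ := sub_pos.2 hz
    exact mul_nonneg (by positivity) (tsum_nonneg fun n ↦ by positivity)
  have hdist : ‖w - coeff 0 φ‖ ≤ ∑' n, ‖coeff (n + 1) φ‖ * ‖z‖ ^ (n + 1) := by
    simpa using norm_sub_apply_zero_le_tsum hw (by
      simpa using (summable_nat_add_iff 1).2
        (hφ.summable_norm_coeff_mul_pow (norm_nonneg z) hz))
  linarith

end Bohr

/-- Theorem 6: for a bounded analytic self-map `f` of the unit disk with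
coefficients `a n`: for every `z` with `|z| = r ≤ 1/5`,
`∑_{n=0}^∞ |aₙ| rⁿ + (1/(1+|a₀|) + r/(1-r)) ∑_{n=1}^∞ |aₙ|² r^{2n}
  + |f(z) - a₀| ≤ 1`;
and for every `z` with `|z| = r ≤ 1/3`,
`|a₀|² + ∑_{n=1}^∞ |aₙ| rⁿ + (1/(1+|a₀|) + r/(1-r)) ∑_{n=1}^∞ |aₙ|² r^{2n}
  + |f(z) - a₀| ≤ 1`. -/
theorem stmt18 (f : ℂ → ℂ) (a : ℕ → ℂ)
    (hf : DifferentiableOn ℂ f (Metric.ball 0 1))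
    (hb : ∀ z ∈ Metric.ball (0 : ℂ) 1, ‖f z‖ ≤ 1)
    (hs : ∀ z ∈ Metric.ball (0 : ℂ) 1, HasSum (fun n => a n * z ^ n) (f z)) :
    (∀ z : ℂ, z ∈ Metric.ball (0 : ℂ) 1 → ‖z‖ ≤ 1 / 5 →
      (∑' n : ℕ, ‖a n‖ * ‖z‖ ^ n)
        + (1 / (1 + ‖a 0‖) + ‖z‖ / (1 - ‖z‖))
          * (∑' n : ℕ, ‖a (n + 1)‖ ^ 2 * ‖z‖ ^ (2 * (n + 1)))
        + ‖f z - a 0‖ ≤ 1) ∧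
    (∀ z : ℂ, z ∈ Metric.ball (0 : ℂ) 1 → ‖z‖ ≤ 1 / 3 →
      ‖a 0‖ ^ 2 + (∑' n : ℕ, ‖a (n + 1)‖ * ‖z‖ ^ (n + 1))
        + (1 / (1 + ‖a 0‖) + ‖z‖ / (1 - ‖z‖))
          * (∑' n : ℕ, ‖a (n + 1)‖ ^ 2 * ‖z‖ ^ (2 * (n + 1)))
        + ‖f z - a 0‖ ≤ 1) := by
  have hφ : IsContractiveMultiplier (PowerSeries.mk a) :=
    isContractiveMultiplier_of_norm_le_one (by simpa only [PowerSeries.coeff_mk] using hs) hb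
  have hdefect : 0 ≤ 1 - ‖a 0‖ ^ 2 :=
    sub_nonneg.2 (pow_le_one₀ (norm_nonneg _) (by simpa using hφ.norm_coeff_le_one 0))
  refine ⟨fun z hz hr ↦ ?_, fun z hz hr ↦ ?_⟩
  all_goals
    have hz₁ : ‖z‖ < 1 := mem_ball_zero_iff.1 hz
    have hle := hφ.tsum_norm_coeff_add_tsum_sq_add_norm_sub_le hz₁ (by simpa using hs z hz)
    simp only [PowerSeries.coeff_mk] at hle
  · have hratio : ‖z‖ / (1 - ‖z‖) ≤ 1 / 4 := (div_le_iff₀ (by linarith)).2 (by linarith)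
    have hsum : Summable fun n ↦ ‖a n‖ * ‖z‖ ^ n := by
      simpa using (hs z hz).summable.norm
    rw [hsum.tsum_eq_zero_add, pow_zero, mul_one]
    linarith [mul_le_mul_of_nonneg_left hratio hdefect, sq_nonneg (1 - ‖a 0‖)]
  · have hratio : ‖z‖ / (1 - ‖z‖) ≤ 1 / 2 := (div_le_iff₀ (by linarith)).2 (by linarith)
    linarith [mul_le_mul_of_nonneg_left hratio hdefect]
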